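/- arXiv:1610.06712 — 2 statements merged into one kernel-verified Lean document; each statement's English description precedes it below -/
import Mathlib

section
/- Let n ≥ 2 be an integer, let s₀, s₁ ∈ ℝⁿ with ‖s₁ − s₀‖ = 2√d for some d > 0, let r > √d, and let μ be the uniform (normalized rotation-invariant) probability measure on the sphere {y ∈ ℝⁿ : ‖y − s₀‖ = r}. Then μ({y : ‖y − s₁‖ ≤ ‖y − s₀‖}) = (Γ(n/2) / (√π · Γ((n−1)/2))) · ∫_0^{arccos(√d / r)} sin^{n−2}(φ) dφ. -/
open MeasureTheory Real

open Set Metric Module InnerProductGeometry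
open scoped ENNReal

/-!
Counting the set of pairs `(y, v)` with `angle y v ≤ θ` in both orders of integration shows that
two rotation-invariant measures without an atom at the origin have, up to total mass, the same
distribution of the angle to a fixed direction. The half-space bounded by the bisector of `s₀` and
`s₁` cuts the sphere in the cap of angular radius `arccos (√d / r)`, so the uniform measure of this
cap is the fraction of the unit ball filled by the solid sector over it, which spherical
coordinates evaluate.
-/

/-- The fraction of the unit sphere of an `n`-dimensional Euclidean space filled by a spherical cap
of angular radius `θ`, for `2 ≤ n` and `θ ∈ [0, π]`. -/
noncomputable def sphericalCapFraction (n : ℕ) (θ : ℝ) : ℝ :=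
  Gamma (n / 2) / (√π * Gamma ((n - 1) / 2)) * ∫ φ in (0 : ℝ)..θ, sin φ ^ (n - 2)

theorem sphericalCapFraction_nonneg {n : ℕ} (hn : 1 ≤ n) {θ : ℝ} (hθ : θ ∈ Icc 0 π) :
    0 ≤ sphericalCapFraction n θ := by
  have hn' : (0 : ℝ) ≤ n - 1 := sub_nonneg.2 (mod_cast hn)
  have hint : 0 ≤ ∫ φ in (0 : ℝ)..θ, sin φ ^ (n - 2) :=
    intervalIntegral.integral_nonneg hθ.1 fun φ hφ ↦
      pow_nonneg (sin_nonneg_of_nonneg_of_le_pi hφ.1 (hφ.2.trans hθ.2)) _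
  exact mul_nonneg (div_nonneg (Gamma_nonneg_of_nonneg (by positivity))
    (mul_nonneg (sqrt_nonneg _) (Gamma_nonneg_of_nonneg (by positivity)))) hint

theorem measurableSet_angle_le {α : Type*} [MeasurableSpace α] {E : Type*} [NormedAddCommGroup E]
    [InnerProductSpace ℝ E] [MeasurableSpace E] [BorelSpace E] [SecondCountableTopology E]
    {f g : α → E} (hf : Measurable f) (hg : Measurable g) (θ : ℝ) :
    MeasurableSet {x | angle (f x) (g x) ≤ θ} := by
  unfold angle
  exact measurableSet_le (by fun_prop) measurable_const

theorem setLIntegral_Ioc_ofReal_eq_intervalIntegral {f : ℝ → ℝ} {a b : ℝ} (hab : a ≤ b)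
    (hf : IntervalIntegrable f volume a b) (hf0 : ∀ x ∈ Ioc a b, 0 ≤ f x) :
    ∫⁻ x in Ioc a b, ENNReal.ofReal (f x) = ENNReal.ofReal (∫ x in a..b, f x) := by
  rw [intervalIntegral.integral_of_le hab, ofReal_integral_eq_lintegral_ofReal
    ((intervalIntegrable_iff_integrableOn_Ioc_of_le hab).1 hf)
    (ae_restrict_of_forall_mem measurableSet_Ioc hf0)]

theorem setLIntegral_mul_indicator_one {α : Type*} [MeasurableSpace α] {μ : Measure α}
    {s t : Set α} (ht : MeasurableSet t) (f : α → ℝ≥0∞) :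
    ∫⁻ x in s, f x * t.indicator 1 x ∂μ = ∫⁻ x in t ∩ s, f x ∂μ := by
  rw [← setLIntegral_indicator ht]
  refine lintegral_congr fun x ↦ ?_
  rw [← indicator_mul_right]
  simp

section SphericalCoordinates

theorem lintegral_fun_norm_addHaar {F : Type*} [NormedAddCommGroup F] [NormedSpace ℝ F]
    [FiniteDimensional ℝ F] [MeasurableSpace F] [BorelSpace F] [Nontrivial F]
    (μ : Measure F) [μ.IsAddHaarMeasure] {f : ℝ → ℝ≥0∞} (hf : Measurable f) :
    ∫⁻ w, f ‖w‖ ∂μ = μ.toSphere univ *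
      ∫⁻ s in Ioi (0 : ℝ), ENNReal.ofReal (s ^ (finrank ℝ F - 1)) * f s := by
  calc
    ∫⁻ w, f ‖w‖ ∂μ = ∫⁻ w : ({0}ᶜ : Set F), f ‖w.1‖ ∂(μ.comap Subtype.val) := by
      rw [lintegral_subtype_comap (measurableSet_singleton _).compl fun w : F ↦ f ‖w‖,
        restrict_compl_singleton]
    _ = ∫⁻ p, f p.2 ∂μ.toSphere.prod (.volumeIoiPow (finrank ℝ F - 1)) := by
      simpa using μ.measurePreserving_homeomorphUnitSphereProd.lintegral_comp_emb
        (Homeomorph.measurableEmbedding _) (f ∘ Subtype.val ∘ Prod.snd)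
    _ = μ.toSphere univ * ∫⁻ s : Ioi (0 : ℝ), f s ∂.volumeIoiPow (finrank ℝ F - 1) := by
      rw [lintegral_prod _ (by fun_prop)]
      simp [mul_comm]
    _ = _ := by
      rw [Measure.volumeIoiPow, lintegral_withDensity_eq_lintegral_mul _ (by fun_prop)
        (by fun_prop)]
      exact congrArg _ (lintegral_subtype_comap measurableSet_Ioi
        fun s : ℝ ↦ ENNReal.ofReal (s ^ (finrank ℝ F - 1)) * f s)

theorem volume_toSphere_univ (F : Type*) [NormedAddCommGroup F] [InnerProductSpace ℝ F]
    [FiniteDimensional ℝ F] [MeasurableSpace F] [BorelSpace F] [Nontrivial F] :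
    (volume : Measure F).toSphere univ =
      ENNReal.ofReal (2 * √π ^ finrank ℝ F / Gamma (finrank ℝ F / 2)) := by
  have hpos : (0 : ℝ) < finrank ℝ F := mod_cast finrank_pos
  have hΓ : Gamma ((finrank ℝ F : ℝ) / 2) ≠ 0 := (Gamma_pos_of_pos (by positivity)).ne'
  rw [Measure.toSphere_apply_univ, InnerProductSpace.volume_ball, ENNReal.ofReal_one, one_pow,
    one_mul, ← ENNReal.ofReal_natCast, ← ENNReal.ofReal_mul hpos.le,
    Gamma_add_one (by positivity)]
  congr 1
  field_simp

theorem lintegral_upperHalfPlane_eq_polar {f : ℝ × ℝ → ℝ≥0∞} (hf : Measurable f) :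
    ∫⁻ x : ℝ, ∫⁻ y in Ioi (0 : ℝ), f (x, y) =
      ∫⁻ ρ in Ioi (0 : ℝ), ∫⁻ φ in Ioo 0 π,
        ENNReal.ofReal ρ * f (ρ * cos φ, ρ * sin φ) := by
  have hhalf : MeasurableSet (univ ×ˢ Ioi 0 : Set (ℝ × ℝ)) :=
    MeasurableSet.univ.prod measurableSet_Ioi
  have hstrip : MeasurableSet (Ioi 0 ×ˢ Ioo 0 π : Set (ℝ × ℝ)) :=
    measurableSet_Ioi.prod measurableSet_Ioo
  have hsin {ρ φ : ℝ} (hρ : 0 < ρ) (hφ : φ ∈ Ioo (-π) π) : 0 < ρ * sin φ ↔ 0 < φ := by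
    refine ⟨fun h ↦ ?_, fun h ↦ mul_pos hρ (sin_pos_of_pos_of_lt_pi h hφ.2)⟩
    by_contra! hneg
    exact (pos_of_mul_pos_right h hρ.le).not_ge
      (sin_nonpos_of_nonpos_of_neg_pi_le hneg hφ.1.le)
  calc
    ∫⁻ x : ℝ, ∫⁻ y in Ioi (0 : ℝ), f (x, y)
      = ∫⁻ p, (univ ×ˢ Ioi 0).indicator f p := by
        rw [lintegral_indicator hhalf, Measure.volume_eq_prod, ← Measure.prod_restrict,
          lintegral_prod _ hf.aemeasurable, Measure.restrict_univ]
    _ = ∫⁻ p, (Ioi 0 ×ˢ Ioo 0 π).indicator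
          (fun p ↦ ENNReal.ofReal p.1 * f (p.1 * cos p.2, p.1 * sin p.2)) p := by
        rw [← lintegral_comp_polarCoord_symm,
          ← lintegral_indicator polarCoord.open_target.measurableSet, polarCoord_target]
        refine lintegral_congr fun ⟨ρ, φ⟩ ↦ ?_
        by_cases hmem : (ρ, φ) ∈ Ioi (0 : ℝ) ×ˢ Ioo (-π) π
        · obtain ⟨hρ, hφ⟩ := hmem
          by_cases hφ0 : 0 < φ <;>
            simp_all [indicator, polarCoord_symm_apply, hsin hρ hφ]
        · have : (ρ, φ) ∉ Ioi (0 : ℝ) ×ˢ Ioo 0 π :=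
            fun h ↦ hmem ⟨h.1, (neg_lt_zero.2 pi_pos).trans h.2.1, h.2.2⟩
          rw [indicator_of_notMem hmem, indicator_of_notMem this]
    _ = _ := by
        rw [lintegral_indicator hstrip, Measure.volume_eq_prod, ← Measure.prod_restrict,
          lintegral_prod _ (by fun_prop)]

theorem lintegral_prod_norm_eq_polar {F : Type*} [NormedAddCommGroup F] [InnerProductSpace ℝ F]
    [FiniteDimensional ℝ F] [MeasurableSpace F] [BorelSpace F] [Nontrivial F]
    {f : ℝ × ℝ → ℝ≥0∞} (hf : Measurable f) :
    ∫⁻ p : ℝ × F, f (p.1, ‖p.2‖) = (volume : Measure F).toSphere univ *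
      ∫⁻ ρ in Ioi (0 : ℝ), ∫⁻ φ in Ioo 0 π,
        ENNReal.ofReal (ρ ^ finrank ℝ F * sin φ ^ (finrank ℝ F - 1)) *
          f (ρ * cos φ, ρ * sin φ) := by
  obtain ⟨k, hk⟩ : ∃ k, finrank ℝ F = k + 1 := Nat.exists_eq_add_one.2 finrank_pos
  calc
    ∫⁻ p : ℝ × F, f (p.1, ‖p.2‖)
      = ∫⁻ x : ℝ, (volume : Measure F).toSphere univ *
          ∫⁻ s in Ioi (0 : ℝ), ENNReal.ofReal (s ^ k) * f (x, s) := by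
        rw [Measure.volume_eq_prod, lintegral_prod _ (by fun_prop)]
        refine lintegral_congr fun x ↦ ?_
        rw [lintegral_fun_norm_addHaar volume (f := fun s ↦ f (x, s)) (by fun_prop), hk,
          Nat.add_sub_cancel]
    _ = (volume : Measure F).toSphere univ * ∫⁻ ρ in Ioi (0 : ℝ), ∫⁻ φ in Ioo 0 π,
          ENNReal.ofReal ρ *
            (ENNReal.ofReal ((ρ * sin φ) ^ k) * f (ρ * cos φ, ρ * sin φ)) := by
        rw [lintegral_const_mul' _ _ (measure_ne_top _ _),
          lintegral_upperHalfPlane_eq_polar (f := fun p ↦ ENNReal.ofReal (p.2 ^ k) * f p)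
            (by fun_prop)]
    _ = _ := by
        congr 1
        refine setLIntegral_congr_fun measurableSet_Ioi fun ρ (hρ : 0 < ρ) ↦
          lintegral_congr fun φ ↦ ?_
        rw [← mul_assoc, ← ENNReal.ofReal_mul hρ.le, hk, Nat.add_sub_cancel]
        ring_nf

variable {E : Type*} [NormedAddCommGroup E] [InnerProductSpace ℝ E]

theorem exists_linearIsometryEquiv_apply_eq {u v : E} (h : ‖u‖ = ‖v‖) :
    ∃ O : E ≃ₗᵢ[ℝ] E, O u = v :=
  ⟨_, Submodule.reflection_sub h⟩

theorem exists_linearIsometryEquiv_prod_apply_eq [FiniteDimensional ℝ E]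
    {F : Type*} [NormedAddCommGroup F] [InnerProductSpace ℝ F] [FiniteDimensional ℝ F]
    (hEF : finrank ℝ E = finrank ℝ F + 1) {e : E} (he : ‖e‖ = 1) :
    ∃ J : E ≃ₗᵢ[ℝ] WithLp 2 (ℝ × F), J e = WithLp.toLp 2 (1, 0) := by
  have hdim : finrank ℝ E = finrank ℝ (WithLp 2 (ℝ × F)) := by
    rw [(WithLp.linearEquiv 2 ℝ (ℝ × F)).finrank_eq, finrank_prod, finrank_self, hEF, add_comm]
  let J := (stdOrthonormalBasis ℝ E).equiv (stdOrthonormalBasis ℝ (WithLp 2 (ℝ × F)))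
    (finCongr hdim)
  obtain ⟨O, hO⟩ := exists_linearIsometryEquiv_apply_eq (u := J e)
    (v := (WithLp.toLp 2 (1, 0) : WithLp 2 (ℝ × F)))
    (by simp [J.norm_map, he])
  exact ⟨J.trans O, hO⟩

variable [FiniteDimensional ℝ E] [MeasurableSpace E] [BorelSpace E]

theorem lintegral_norm_angle_eq_spherical (hE : 2 ≤ finrank ℝ E) {e : E} (he : ‖e‖ = 1)
    {f : ℝ × ℝ → ℝ≥0∞} (hf : Measurable f) :
    ∫⁻ v, f (‖v‖, angle e v) =
      (volume : Measure (EuclideanSpace ℝ (Fin (finrank ℝ E - 1)))).toSphere univ *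
        ∫⁻ ρ in Ioi (0 : ℝ), ∫⁻ φ in Ioo 0 π,
          ENNReal.ofReal (ρ ^ (finrank ℝ E - 1) * sin φ ^ (finrank ℝ E - 2)) * f (ρ, φ) := by
  set F := EuclideanSpace ℝ (Fin (finrank ℝ E - 1))
  have hF : finrank ℝ F = finrank ℝ E - 1 := finrank_euclideanSpace_fin
  have : Nontrivial F := nontrivial_of_finrank_pos (R := ℝ) (by omega)
  obtain ⟨J, hJ⟩ := exists_linearIsometryEquiv_prod_apply_eq (F := F) (by omega) he
  let polar : ℝ × ℝ → ℝ × ℝ := fun p ↦ (√(p.1 ^ 2 + p.2 ^ 2), arccos (p.1 / √(p.1 ^ 2 + p.2 ^ 2)))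
  have hpolar : Measurable polar := by fun_prop
  have hnorm (v : E) : ‖v‖ = √((J v).fst ^ 2 + ‖(J v).snd‖ ^ 2) := by
    rw [← J.norm_map, WithLp.prod_norm_eq_of_L2, Real.norm_eq_abs, sq_abs]
  have hangle (v : E) : angle e v = arccos ((J v).fst / ‖v‖) := by
    rw [angle, he, one_mul, ← J.inner_map_map, hJ, WithLp.prod_inner_apply]
    simp
  calc
    ∫⁻ v, f (‖v‖, angle e v) = ∫⁻ v, f (polar ((J v).fst, ‖(J v).snd‖)) := by
      simp only [hangle, hnorm, polar]
    _ = ∫⁻ p : ℝ × F, f (polar (p.1, ‖p.2‖)) := by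
      rw [← (WithLp.volume_preserving_ofLp ℝ F).lintegral_comp_emb
        (MeasurableEquiv.toLp 2 (ℝ × F)).symm.measurableEmbedding,
        ← J.measurePreserving.lintegral_comp_emb J.toHomeomorph.measurableEmbedding]
      rfl
    _ = _ := by
      refine (lintegral_prod_norm_eq_polar (hf.comp hpolar)).trans ?_
      rw [hF, Nat.sub_sub]
      congr 1
      refine setLIntegral_congr_fun measurableSet_Ioi fun ρ (hρ : 0 < ρ) ↦
        setLIntegral_congr_fun measurableSet_Ioo fun φ hφ ↦ ?_
      have hsqrt : √((ρ * cos φ) ^ 2 + (ρ * sin φ) ^ 2) = ρ := by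
        rw [mul_pow, mul_pow, ← mul_add, cos_sq_add_sin_sq, mul_one, sqrt_sq hρ.le]
      simp only [polar, hsqrt, mul_div_cancel_left₀ _ hρ.ne', arccos_cos hφ.1.le hφ.2.le,
        Function.comp_apply]

theorem volume_angle_le_inter_closedBall_eq_toSphere (hE : 2 ≤ finrank ℝ E) {e : E}
    (he : ‖e‖ = 1) {θ : ℝ} (hθ : θ ∈ Icc 0 π) :
    volume ({v | angle e v ≤ θ} ∩ closedBall 0 1) =
      (volume : Measure (EuclideanSpace ℝ (Fin (finrank ℝ E - 1)))).toSphere univ *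
        ENNReal.ofReal ((∫ φ in (0 : ℝ)..θ, sin φ ^ (finrank ℝ E - 2)) / finrank ℝ E) := by
  set n := finrank ℝ E
  set A := (volume : Measure (EuclideanSpace ℝ (Fin (n - 1)))).toSphere univ
  have hset : MeasurableSet ({v | angle e v ≤ θ} ∩ closedBall 0 1) :=
    (measurableSet_angle_le measurable_const measurable_id' θ).inter measurableSet_closedBall
  have hind {a : ℝ} : Measurable ((Iic a).indicator 1 : ℝ → ℝ≥0∞) :=
    measurable_one.indicator measurableSet_Iic
  have hradial : ∫⁻ ρ in Ioi (0 : ℝ), ENNReal.ofReal (ρ ^ (n - 1)) * (Iic 1).indicator 1 ρ =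
      ENNReal.ofReal (n : ℝ)⁻¹ := by
    rw [setLIntegral_mul_indicator_one measurableSet_Iic, Iic_inter_Ioi,
      setLIntegral_Ioc_ofReal_eq_intervalIntegral zero_le_one
        (Continuous.intervalIntegrable (by fun_prop) _ _) fun ρ hρ ↦ pow_nonneg hρ.1.le _,
      integral_pow, ← Nat.cast_add_one, Nat.sub_add_cancel (by omega), one_pow,
      zero_pow (by omega), sub_zero, one_div]
  have hangular : ∫⁻ φ in Ioo 0 π, ENNReal.ofReal (sin φ ^ (n - 2)) * (Iic θ).indicator 1 φ =
      ENNReal.ofReal (∫ φ in (0 : ℝ)..θ, sin φ ^ (n - 2)) := by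
    rw [restrict_Ioo_eq_restrict_Ioc, setLIntegral_mul_indicator_one measurableSet_Iic,
      Iic_inter_Ioc_of_le hθ.2]
    exact setLIntegral_Ioc_ofReal_eq_intervalIntegral hθ.1
      (Continuous.intervalIntegrable (by fun_prop) _ _) fun φ hφ ↦
        pow_nonneg (sin_nonneg_of_nonneg_of_le_pi hφ.1.le (hφ.2.trans hθ.2)) _
  calc
    volume ({v | angle e v ≤ θ} ∩ closedBall 0 1)
      = ∫⁻ v, (Iic 1).indicator 1 ‖v‖ * (Iic θ).indicator 1 (angle e v) := by
        rw [← lintegral_indicator_one hset]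
        refine lintegral_congr fun v ↦ ?_
        by_cases h₁ : ‖v‖ ≤ 1 <;> by_cases h₂ : angle e v ≤ θ <;> simp [h₁, h₂]
    _ = A * ∫⁻ ρ in Ioi (0 : ℝ), ∫⁻ φ in Ioo 0 π,
          (ENNReal.ofReal (ρ ^ (n - 1)) * (Iic 1).indicator 1 ρ) *
            (ENNReal.ofReal (sin φ ^ (n - 2)) * (Iic θ).indicator 1 φ) := by
        rw [lintegral_norm_angle_eq_spherical hE he
          (f := fun p ↦ (Iic 1).indicator 1 p.1 * (Iic θ).indicator 1 p.2) (by fun_prop)]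
        congr 1
        refine setLIntegral_congr_fun measurableSet_Ioi fun ρ (hρ : 0 < ρ) ↦
          lintegral_congr fun φ ↦ ?_
        rw [ENNReal.ofReal_mul (by positivity), mul_mul_mul_comm]
    _ = A * ENNReal.ofReal ((∫ φ in (0 : ℝ)..θ, sin φ ^ (n - 2)) / n) := by
        rw [lintegral_lintegral_mul (by fun_prop) (by fun_prop), hradial, hangular,
          ← ENNReal.ofReal_mul (by positivity), div_eq_inv_mul]

theorem volume_angle_le_inter_closedBall (hE : 2 ≤ finrank ℝ E) {u : E} (hu : u ≠ 0) {θ : ℝ}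
    (hθ : θ ∈ Icc 0 π) :
    volume ({v | angle u v ≤ θ} ∩ closedBall 0 1) =
      ENNReal.ofReal (sphericalCapFraction (finrank ℝ E) θ) * volume (closedBall (0 : E) 1) := by
  have hdir : {v | angle u v ≤ θ} = {v | angle (‖u‖⁻¹ • u) v ≤ θ} := by
    simp only [angle_smul_left_of_pos _ _ (inv_pos.2 (norm_pos_iff.2 hu))]
  have hunit : ‖‖u‖⁻¹ • u‖ = 1 := by
    rw [norm_smul, norm_inv, norm_norm, inv_mul_cancel₀ (norm_ne_zero_iff.2 hu)]
  have : Nonempty (Fin (finrank ℝ E - 1)) := ⟨0, by omega⟩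
  have : Nontrivial E := nontrivial_of_finrank_pos (R := ℝ) (by omega)
  have hn : (2 : ℝ) ≤ finrank ℝ E := mod_cast hE
  have hΓ' : 0 < Gamma (((finrank ℝ E : ℝ) - 1) / 2) := Gamma_pos_of_pos (by linarith)
  rw [hdir, volume_angle_le_inter_closedBall_eq_toSphere hE hunit hθ,
    sphericalCapFraction, volume_toSphere_univ, finrank_euclideanSpace_fin,
    InnerProductSpace.volume_closedBall, ENNReal.ofReal_one, one_pow, one_mul,
    Gamma_add_one (by positivity), Nat.cast_sub (by omega), Nat.cast_one,
    ← ENNReal.ofReal_mul (by positivity), ← ENNReal.ofReal_mul' (by positivity)]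
  congr 1
  obtain ⟨k, hk⟩ : ∃ k, finrank ℝ E = k + 1 := Nat.exists_eq_add_one.2 (by omega)
  field_simp
  rw [hk, pow_succ, Nat.add_sub_cancel]
  ring

end SphericalCoordinates

section RotationInvariance

variable {E : Type*} [NormedAddCommGroup E] [InnerProductSpace ℝ E] [MeasurableSpace E]

/-- A measure is rotation invariant if every linear isometric automorphism, orientation reversing
ones included, preserves it. -/
def IsRotationInvariant (μ : Measure E) : Prop :=
  ∀ O : E ≃ₗᵢ[ℝ] E, MeasurePreserving O μ μ

variable [BorelSpace E]

theorem isRotationInvariant_volume_restrict_closedBall [FiniteDimensional ℝ E] (r : ℝ) :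
    IsRotationInvariant ((volume : Measure E).restrict (closedBall 0 r)) := by
  intro O
  simpa using O.measurePreserving.restrict_preimage
    (measurableSet_closedBall (x := (0 : E)) (ε := r))

theorem isRotationInvariant_map_sub {μ : Measure E} {c : E}
    (hμ : ∀ O : E ≃ₗᵢ[ℝ] E, μ.map (fun y ↦ c + O (y - c)) = μ) :
    IsRotationInvariant (μ.map (· - c)) := by
  refine fun O ↦ ⟨O.continuous.measurable, ?_⟩
  have hrot : Continuous fun y ↦ c + O (y - c) :=
    continuous_const.add (O.continuous.comp (continuous_sub_right c))
  conv_rhs => rw [← hμ O]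
  rw [Measure.map_map O.continuous.measurable (by fun_prop),
    Measure.map_map (by fun_prop) hrot.measurable]
  congr 1
  ext y
  simp

theorem measure_angle_le_eq {μ : Measure E} (hμ : IsRotationInvariant μ) {u v : E}
    (hu : u ≠ 0) (hv : v ≠ 0) (θ : ℝ) : μ {y | angle u y ≤ θ} = μ {y | angle v y ≤ θ} := by
  have hnorm : ‖(‖v‖ / ‖u‖) • u‖ = ‖v‖ := by
    rw [norm_smul, norm_div, norm_norm, norm_norm, div_mul_cancel₀ _ (norm_ne_zero_iff.2 hu)]
  obtain ⟨O, hO⟩ := exists_linearIsometryEquiv_apply_eq hnorm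
  have hangle (y : E) : angle v (O y) = angle u y := by
    rw [← hO, ← O.coe_toLinearIsometry, LinearIsometry.angle_map,
      angle_smul_left_of_pos _ _ (by positivity)]
  simpa only [preimage_ofPred_eq, LinearIsometryEquiv.coe_toMeasurableEquiv, hangle] using
    (MeasurePreserving.measure_preimage_equiv (f := O.toMeasurableEquiv) (hμ O)
      {y | angle v y ≤ θ})

variable [SecondCountableTopology E]

theorem prod_angle_le {μ ν : Measure E} [SFinite ν] (hν : IsRotationInvariant ν)
    (hμ0 : μ {0} = 0) {u : E} (hu : u ≠ 0) (θ : ℝ) :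
    μ.prod ν {p | angle p.1 p.2 ≤ θ} = ν {y | angle u y ≤ θ} * μ univ := by
  have hne : ∀ᵐ y ∂μ, y ≠ 0 := measure_eq_zero_iff_ae_notMem.1 hμ0
  rw [Measure.prod_apply (measurableSet_angle_le measurable_fst measurable_snd θ),
    ← lintegral_const]
  exact lintegral_congr_ae (hne.mono fun y hy ↦ measure_angle_le_eq hν hy hu θ)

theorem measure_angle_le_mul_measure_univ {μ ν : Measure E} [SFinite μ] [SFinite ν]
    (hμ : IsRotationInvariant μ) (hν : IsRotationInvariant ν) (hμ0 : μ {0} = 0)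
    (hν0 : ν {0} = 0) {u : E} (hu : u ≠ 0) (θ : ℝ) :
    μ {y | angle u y ≤ θ} * ν univ = ν {y | angle u y ≤ θ} * μ univ := by
  rw [← prod_angle_le hμ hν0 hu, ← prod_angle_le hν hμ0 hu, ← Measure.prod_swap,
    Measure.map_apply measurable_swap (measurableSet_angle_le measurable_fst measurable_snd θ)]
  simp [angle_comm]

end RotationInvariance

section SphericalCap

variable {E : Type*} [NormedAddCommGroup E] [InnerProductSpace ℝ E] [FiniteDimensional ℝ E]
  [MeasurableSpace E] [BorelSpace E]

theorem measure_angle_le (hE : 2 ≤ finrank ℝ E) {μ : Measure E}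
    [SFinite μ] (hμ : IsRotationInvariant μ) (hμ0 : μ {0} = 0) {u : E} (hu : u ≠ 0) {θ : ℝ}
    (hθ : θ ∈ Icc 0 π) :
    μ {y | angle u y ≤ θ} =
      ENNReal.ofReal (sphericalCapFraction (finrank ℝ E) θ) * μ univ := by
  have : Nontrivial E := nontrivial_of_finrank_pos (R := ℝ) (by omega)
  have hball : volume (closedBall (0 : E) 1) ≠ 0 := (measure_closedBall_pos _ _ one_pos).ne'
  have hball' : volume (closedBall (0 : E) 1) ≠ ∞ := measure_closedBall_lt_top.ne
  have hcompare := measure_angle_le_mul_measure_univ hμ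
    (isRotationInvariant_volume_restrict_closedBall 1) hμ0
    (measure_singleton 0) hu θ
  rw [Measure.restrict_apply_univ, Measure.restrict_apply' measurableSet_closedBall,
    volume_angle_le_inter_closedBall hE hu hθ, mul_right_comm] at hcompare
  exact (ENNReal.mul_left_inj hball hball').1 hcompare

theorem measureReal_angle_sub_le (hE : 2 ≤ finrank ℝ E) {μ : Measure E} [IsProbabilityMeasure μ]
    {c : E} (hμ : ∀ O : E ≃ₗᵢ[ℝ] E, μ.map (fun y ↦ c + O (y - c)) = μ) (hc : μ {c} = 0)
    {u : E} (hu : u ≠ 0) {θ : ℝ} (hθ : θ ∈ Icc 0 π) :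
    μ.real {y | angle u (y - c) ≤ θ} = sphericalCapFraction (finrank ℝ E) θ := by
  have hsub : Measurable fun y : E ↦ y - c := by fun_prop
  have hc' : μ.map (· - c) {0} = 0 := by
    rw [Measure.map_apply hsub (measurableSet_singleton 0)]
    simpa [preimage, sub_eq_zero] using hc
  have hprob : IsProbabilityMeasure (μ.map (· - c)) :=
    Measure.isProbabilityMeasure_map hsub.aemeasurable
  have hfraction := measure_angle_le hE (isRotationInvariant_map_sub hμ) hc' hu hθ
  rw [Measure.map_apply hsub (measurableSet_angle_le measurable_const measurable_id' θ),
    measure_univ, mul_one, preimage_ofPred_eq] at hfraction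
  rw [measureReal_def, hfraction,
    ENNReal.toReal_ofReal (sphericalCapFraction_nonneg (one_le_two.trans hE) hθ)]

end SphericalCap

theorem norm_sub_le_norm_iff_angle_le {E : Type*} [NormedAddCommGroup E]
    [InnerProductSpace ℝ E] {u z : E} (hu : u ≠ 0) (hz : z ≠ 0) (huz : ‖u‖ ≤ 2 * ‖z‖) :
    ‖z - u‖ ≤ ‖z‖ ↔ angle u z ≤ arccos (‖u‖ / (2 * ‖z‖)) := by
  have hz' : 0 < ‖z‖ := norm_pos_iff.2 hz
  have hratio : ‖u‖ / (2 * ‖z‖) ∈ Icc (-1) 1 :=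
    ⟨neg_one_lt_zero.le.trans (by positivity), (div_le_one (by positivity)).2 huz⟩
  rw [angle, strictAntiOn_arccos.le_iff_ge
      (abs_le.1 (abs_real_inner_div_norm_mul_norm_le_one u z)) hratio,
    div_le_div_iff₀ (by positivity) (by positivity),
    ← sq_le_sq₀ (norm_nonneg _) (norm_nonneg _), norm_sub_sq_real, real_inner_comm u z]
  have hcancel : ‖u‖ * (‖u‖ * ‖z‖) ≤ inner ℝ u z * (2 * ‖z‖) ↔
      ‖u‖ ^ 2 ≤ 2 * inner ℝ u z := by
    rw [← mul_assoc, ← sq, ← mul_assoc, mul_le_mul_iff_left₀ hz', mul_comm]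
  rw [hcancel]
  constructor <;> intro h <;> linarith

theorem stmt_6_general {E : Type*} [NormedAddCommGroup E] [InnerProductSpace ℝ E]
    [FiniteDimensional ℝ E] [MeasurableSpace E] [BorelSpace E] (hE : 2 ≤ finrank ℝ E)
    {d : ℝ} (hd : 0 < d) {r : ℝ} (hr : √d ≤ r) {s₀ s₁ : E} (hdist : ‖s₁ - s₀‖ = 2 * √d)
    {μ : Measure E} [IsProbabilityMeasure μ] (hsupp : μ (sphere s₀ r) = 1)
    (hinv : ∀ O : E ≃ₗᵢ[ℝ] E, μ.map (fun y ↦ s₀ + O (y - s₀)) = μ) :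
    (μ {y | ‖y - s₁‖ ≤ ‖y - s₀‖}).toReal =
      Gamma (finrank ℝ E / 2) / (√π * Gamma ((finrank ℝ E - 1) / 2)) *
        ∫ φ in (0 : ℝ)..arccos (√d / r), sin φ ^ (finrank ℝ E - 2) := by
  have hr₀ : 0 < r := (sqrt_pos.2 hd).trans_le hr
  have hu : s₁ - s₀ ≠ 0 := norm_pos_iff.1 (by rw [hdist]; positivity)
  have hsphere : ∀ᵐ y ∂μ, ‖y - s₀‖ = r :=
    Filter.mem_of_superset ((mem_ae_iff_prob_eq_one isClosed_sphere.measurableSet).2 hsupp)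
      fun y hy ↦ mem_sphere_iff_norm.1 hy
  have hcenter : μ {s₀} = 0 := measure_eq_zero_iff_ae_notMem.2 <| hsphere.mono fun y hy ↦ by
    rw [mem_singleton_iff, ← sub_eq_zero, ← norm_eq_zero, hy]
    exact hr₀.ne'
  have hcap : {y | ‖y - s₁‖ ≤ ‖y - s₀‖} =ᵐ[μ]
      {y | angle (s₁ - s₀) (y - s₀) ≤ arccos (√d / r)} := by
    filter_upwards [hsphere] with y hy
    have hz : y - s₀ ≠ 0 := norm_pos_iff.1 (hy ▸ hr₀)
    have hiff := norm_sub_le_norm_iff_angle_le hu hz (by rw [hdist, hy]; gcongr)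
    rw [sub_sub_sub_cancel_right, hdist, hy, mul_div_mul_left _ _ two_ne_zero] at hiff
    exact propext ((hy ▸ Iff.rfl : _ ↔ ‖y - s₁‖ ≤ r).trans hiff)
  rw [measure_congr hcap]
  exact measureReal_angle_sub_le hE hinv hcenter hu ⟨arccos_nonneg _, arccos_le_pi _⟩

theorem stmt_6 (n : ℕ) (hn : 2 ≤ n) (d : ℝ) (hd : 0 < d) (r : ℝ) (hr : Real.sqrt d < r)
    (s₀ s₁ : EuclideanSpace ℝ (Fin n)) (hdist : ‖s₁ - s₀‖ = 2 * Real.sqrt d)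
    (μ : Measure (EuclideanSpace ℝ (Fin n))) [IsProbabilityMeasure μ]
    (hsupp : μ (Metric.sphere s₀ r) = 1)
    (hinv : ∀ O : EuclideanSpace ℝ (Fin n) ≃ₗᵢ[ℝ] EuclideanSpace ℝ (Fin n),
      μ.map (fun y => s₀ + O (y - s₀)) = μ) :
    (μ {y | ‖y - s₁‖ ≤ ‖y - s₀‖}).toReal =
      (Real.Gamma ((n : ℝ) / 2) / (Real.sqrt π * Real.Gamma (((n : ℝ) - 1) / 2))) *
        ∫ φ in (0:ℝ)..(Real.arccos (Real.sqrt d / r)), (Real.sin φ) ^ (n - 2) := by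
  simpa using stmt_6_general (E := EuclideanSpace ℝ (Fin n)) (by simpa) hd hr.le hdist hsupp hinv
end

section
/- Let n ≥ 1 be an integer, s₀ ∈ ℝⁿ, and let S ⊆ ℝⁿ be a set with s₀ ∉ S. Define the error region E = {y ∈ ℝⁿ : ∃ s ∈ S, ‖y − s‖ ≤ ‖y − s₀‖}. For r > 0 let μ_r denote the uniform (normalized rotation-invariant) probability measure on the sphere {y ∈ ℝⁿ : ‖y − s₀‖ = r}. Then (i) for any 0 < r ≤ r', the dilation y ↦ s₀ + (r'/r)(y − s₀) maps E ∩ {y : ‖y − s₀‖ = r} into E ∩ {y : ‖y − s₀‖ = r'}, and (ii) the function r ↦ μ_r(E) is nondecreasing on (0, ∞). -/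
open MeasureTheory

/-!
If `y` is at least as close to a competitor `s` as to `s₀`, then moving `y` away from `s₀` by some
distance `δ` along the ray from `s₀` increases `‖y - s₀‖` by exactly `δ` and, by the triangle
inequality, `‖y - s‖` by at most `δ`. Hence the error region is stable under dilations from `s₀`
of ratio at least one.

The characteristic function of a rotation-invariant measure is constant on spheres around the
origin. Hence if `μ` and `ν` are uniform on the sphere of radius `r` around the origin, then
`charFun μ t` is the average over `x` with respect to `ν` of `charFun μ ((‖t‖ / r) • x)`, and this
double integral is symmetric in `μ` and `ν`. So the uniform measure on a sphere is unique, and the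
one on the sphere of radius `r'` is the image of the one on the sphere of radius `r` under a
dilation.
-/

section Dilation

variable {V : Type*} [SeminormedAddCommGroup V]

/-- The maximum-likelihood error region of the signal `s₀` against the competing signals `S`: the
points at least as close to some competitor as to `s₀`. Ties count as errors. -/
def errorRegion (s₀ : V) (S : Set V) : Set V :=
  {y | ∃ s ∈ S, ‖y - s‖ ≤ ‖y - s₀‖}

variable [NormedSpace ℝ V]

lemma add_smul_sub_mem_sphere {c y : V} {r k : ℝ} (d : V) (hk : 0 ≤ k)
    (hy : y ∈ Metric.sphere c r) : d + k • (y - c) ∈ Metric.sphere d (k * r) := by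
  rw [mem_sphere_iff_norm] at hy ⊢
  rw [add_sub_cancel_left, norm_smul_of_nonneg hk, hy]

lemma add_smul_sub_mem_errorRegion {s₀ y : V} {S : Set V} {k : ℝ} (hk : 1 ≤ k)
    (hy : y ∈ errorRegion s₀ S) : s₀ + k • (y - s₀) ∈ errorRegion s₀ S := by
  obtain ⟨s, hs, hys⟩ := hy
  refine ⟨s, hs, ?_⟩
  calc ‖s₀ + k • (y - s₀) - s‖
      = ‖(k - 1) • (y - s₀) + (y - s)‖ := by congr 1; module
    _ ≤ (k - 1) * ‖y - s₀‖ + ‖y - s‖ := by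
      grw [norm_add_le, norm_smul_of_nonneg (sub_nonneg.2 hk)]
    _ ≤ (k - 1) * ‖y - s₀‖ + ‖y - s₀‖ := by gcongr
    _ = ‖s₀ + k • (y - s₀) - s₀‖ := by
      rw [add_sub_cancel_left, norm_smul_of_nonneg (zero_le_one.trans hk)]
      ring

end Dilation

section CharFun

variable {V : Type*} [NormedAddCommGroup V] [InnerProductSpace ℝ V] [MeasurableSpace V]

lemma charFun_eq_of_norm_eq [BorelSpace V] {μ : Measure V}
    (hμ : ∀ O : V ≃ₗᵢ[ℝ] V, μ.map O = μ) {t u : V} (h : ‖t‖ = ‖u‖) :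
    charFun μ t = charFun μ u := by
  let O : V ≃ₗᵢ[ℝ] V := (ℝ ∙ (t - u))ᗮ.reflection
  have hO : O t = u := Submodule.reflection_sub h
  calc charFun μ t
      = ∫ x, Complex.exp (inner ℝ (O x) (O t) * Complex.I) ∂μ := by
        simp only [O.inner_map_map, charFun_apply]
    _ = charFun (μ.map O) u := by
        rw [hO, charFun_apply, integral_map O.continuous.measurable.aemeasurable (by fun_prop)]
    _ = charFun μ u := by rw [hμ]

lemma integral_charFun_smul_comm [OpensMeasurableSpace V] [SecondCountableTopology V]
    (μ ν : Measure V) [IsFiniteMeasure μ] [IsFiniteMeasure ν] (a : ℝ) :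
    ∫ x, charFun μ (a • x) ∂ν = ∫ x, charFun ν (a • x) ∂μ := by
  have hint : Integrable
      (Function.uncurry fun x y : V ↦ Complex.exp (inner ℝ y (a • x) * Complex.I))
      (ν.prod μ) := by
    refine .of_bound (C := 1) (by fun_prop) (.of_forall fun p ↦ ?_)
    exact (Complex.norm_exp_ofReal_mul_I _).le
  simp only [charFun_apply]
  rw [integral_integral_swap hint]
  simp only [real_inner_smul_right, real_inner_comm]

end CharFun

section UniformOnSphere

variable {V : Type*} [NormedAddCommGroup V] [InnerProductSpace ℝ V] [MeasurableSpace V]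

/-- `μ` is the uniform distribution on the sphere of radius `r` around `c`: a probability measure
on `V` concentrated on that sphere and invariant under every linear isometry about `c`. -/
structure IsUniformOnSphere (c : V) (r : ℝ) (μ : Measure V) : Prop where
  isProbabilityMeasure : IsProbabilityMeasure μ
  measure_sphere : μ (Metric.sphere c r) = 1
  map_isometry : ∀ O : V ≃ₗᵢ[ℝ] V, μ.map (fun y ↦ c + O (y - c)) = μ

namespace IsUniformOnSphere

variable [BorelSpace V] {c : V} {r : ℝ} {μ ν : Measure V}

lemma ae_mem_sphere (hμ : IsUniformOnSphere c r μ) : ∀ᵐ y ∂μ, y ∈ Metric.sphere c r :=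
  have := hμ.isProbabilityMeasure
  (mem_ae_iff_prob_eq_one Metric.isClosed_sphere.measurableSet).2 hμ.measure_sphere

lemma map_add_smul_sub (hμ : IsUniformOnSphere c r μ) (d : V) {k : ℝ} (hk : 0 ≤ k) :
    IsUniformOnSphere d (k * r) (μ.map fun y ↦ d + k • (y - c)) := by
  have hdil : Measurable fun y : V ↦ d + k • (y - c) :=
    Continuous.measurable (by fun_prop)
  have hrot (e : V) (O : V ≃ₗᵢ[ℝ] V) : Measurable fun y : V ↦ e + O (y - e) :=
    Continuous.measurable (by fun_prop)
  have := hμ.isProbabilityMeasure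
  have hprob := Measure.isProbabilityMeasure_map (μ := μ) hdil.aemeasurable
  refine ⟨hprob, ?_, fun O ↦ ?_⟩
  · rw [← mem_ae_iff_prob_eq_one Metric.isClosed_sphere.measurableSet]
    refine (ae_map_iff hdil.aemeasurable Metric.isClosed_sphere.measurableSet).2 ?_
    filter_upwards [hμ.ae_mem_sphere] with y hy using add_smul_sub_mem_sphere d hk hy
  · have hcomm : (fun y ↦ d + O (y - d)) ∘ (fun y ↦ d + k • (y - c)) =
        (fun y ↦ d + k • (y - c)) ∘ fun y ↦ c + O (y - c) := by
      funext y
      simp only [Function.comp_apply, add_sub_cancel_left, map_smul]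
    rw [Measure.map_map (hrot d O) hdil, hcomm, ← Measure.map_map hdil (hrot c O),
      hμ.map_isometry O]

lemma charFun_eq_integral (hμ : IsUniformOnSphere 0 r μ) (hν : IsUniformOnSphere 0 r ν)
    (hr : r ≠ 0) (t : V) : charFun μ t = ∫ x, charFun μ ((‖t‖ / r) • x) ∂ν := by
  have := hν.isProbabilityMeasure
  have hrot (O : V ≃ₗᵢ[ℝ] V) : μ.map O = μ := by
    simpa only [zero_add, sub_zero] using hμ.map_isometry O
  have hconst : ∀ᵐ x ∂ν, charFun μ ((‖t‖ / r) • x) = charFun μ t := by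
    filter_upwards [hν.ae_mem_sphere] with x hx
    have hxr : ‖x‖ = r := mem_sphere_zero_iff_norm.1 hx
    refine charFun_eq_of_norm_eq hrot ?_
    rw [norm_smul, norm_div, norm_norm, ← hxr, norm_norm, div_mul_cancel₀ _ (hxr ▸ hr)]
  rw [integral_congr_ae hconst, integral_const, probReal_univ, one_smul]

variable [CompleteSpace V] [SecondCountableTopology V]

lemma eq_of_center_zero (hμ : IsUniformOnSphere 0 r μ) (hν : IsUniformOnSphere 0 r ν)
    (hr : r ≠ 0) : μ = ν := by
  have := hμ.isProbabilityMeasure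
  have := hν.isProbabilityMeasure
  refine Measure.ext_of_charFun (funext fun t ↦ ?_)
  rw [hμ.charFun_eq_integral hν hr, hν.charFun_eq_integral hμ hr, integral_charFun_smul_comm]

theorem unique (hμ : IsUniformOnSphere c r μ) (hν : IsUniformOnSphere c r ν) (hr : r ≠ 0) :
    μ = ν := by
  have hcenter {ρ : Measure V} (hρ : IsUniformOnSphere c r ρ) :
      IsUniformOnSphere 0 r (ρ.map (· - c)) := by
    simpa only [zero_add, one_smul, one_mul] using hρ.map_add_smul_sub 0 zero_le_one
  exact (MeasurableEquiv.subRight c).map_measurableEquiv_injective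
    ((hcenter hμ).eq_of_center_zero (hcenter hν) hr)

theorem measure_le_of_mapsTo {r' : ℝ} {E : Set V} (hμ : IsUniformOnSphere c r μ)
    (hν : IsUniformOnSphere c r' ν) (hr : 0 < r) (hr' : 0 < r')
    (hE : Set.MapsTo (fun y ↦ c + (r' / r) • (y - c)) (E ∩ Metric.sphere c r) E) :
    μ E ≤ ν E := by
  set dil : V → V := fun y ↦ c + (r' / r) • (y - c)
  have hdil : IsUniformOnSphere c r' (μ.map dil) := by
    simpa only [div_mul_cancel₀ _ hr.ne'] using hμ.map_add_smul_sub c (div_pos hr' hr).le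
  calc μ E
      ≤ μ (dil ⁻¹' E) := by
        refine measure_mono_ae ?_
        filter_upwards [hμ.ae_mem_sphere] with y hy hyE using hE ⟨hyE, hy⟩
    _ ≤ μ.map dil E := Measure.le_map_apply (by fun_prop) E
    _ = ν E := by rw [hdil.unique hν hr'.ne']

end IsUniformOnSphere

end UniformOnSphere

theorem stmt_18_general {V : Type*} [NormedAddCommGroup V] [InnerProductSpace ℝ V]
    [CompleteSpace V] [SecondCountableTopology V] [MeasurableSpace V] [BorelSpace V]
    (s₀ : V) (S : Set V) (μ : ℝ → Measure V)
    (hμ : ∀ r : ℝ, 0 < r → IsUniformOnSphere s₀ r (μ r)) :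
    (∀ r r' : ℝ, 0 < r → r ≤ r' →
      ∀ y ∈ errorRegion s₀ S ∩ Metric.sphere s₀ r,
        s₀ + (r' / r) • (y - s₀) ∈ errorRegion s₀ S ∩ Metric.sphere s₀ r') ∧
    (∀ r r' : ℝ, 0 < r → r ≤ r' → μ r (errorRegion s₀ S) ≤ μ r' (errorRegion s₀ S)) := by
  have hdilation : ∀ r r' : ℝ, 0 < r → r ≤ r' →
      ∀ y ∈ errorRegion s₀ S ∩ Metric.sphere s₀ r,
        s₀ + (r' / r) • (y - s₀) ∈ errorRegion s₀ S ∩ Metric.sphere s₀ r' := by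
    rintro r r' hr hrr' y ⟨hyE, hyr⟩
    have hk : 1 ≤ r' / r := (one_le_div hr).2 hrr'
    have hsphere := add_smul_sub_mem_sphere s₀ (zero_le_one.trans hk) hyr
    rw [div_mul_cancel₀ _ hr.ne'] at hsphere
    exact ⟨add_smul_sub_mem_errorRegion hk hyE, hsphere⟩
  refine ⟨hdilation, fun r r' hr hrr' ↦ ?_⟩
  have hr' : 0 < r' := hr.trans_le hrr'
  exact (hμ r hr).measure_le_of_mapsTo (hμ r' hr') hr hr' fun y hy ↦
    (hdilation r r' hr hrr' y hy).1

theorem stmt_18 (n : ℕ) (hn : 1 ≤ n)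
    (s₀ : EuclideanSpace ℝ (Fin n)) (S : Set (EuclideanSpace ℝ (Fin n))) (hS : s₀ ∉ S)
    (E : Set (EuclideanSpace ℝ (Fin n)))
    (hE : E = {y | ∃ s ∈ S, ‖y - s‖ ≤ ‖y - s₀‖})
    (μ : ℝ → Measure (EuclideanSpace ℝ (Fin n)))
    (hprob : ∀ r : ℝ, 0 < r → IsProbabilityMeasure (μ r))
    (hsupp : ∀ r : ℝ, 0 < r → μ r (Metric.sphere s₀ r) = 1)
    (hinv : ∀ r : ℝ, 0 < r →
      ∀ O : EuclideanSpace ℝ (Fin n) ≃ₗᵢ[ℝ] EuclideanSpace ℝ (Fin n),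
        (μ r).map (fun y => s₀ + O (y - s₀)) = μ r) :
    (∀ r r' : ℝ, 0 < r → r ≤ r' →
      ∀ y ∈ E ∩ Metric.sphere s₀ r,
        s₀ + (r' / r) • (y - s₀) ∈ E ∩ Metric.sphere s₀ r') ∧
    (∀ r r' : ℝ, 0 < r → r ≤ r' → μ r E ≤ μ r' E) := by
  subst hE
  exact stmt_18_general s₀ S μ fun r hr ↦ ⟨hprob r hr, hsupp r hr, hinv r hr⟩
end
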